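/- The quotient of the direct product A(D4) × ℤ² by the normal closure of the single element (((a1*a2*a3*b)^3)⁻¹, u1*u2), where u1, u2 is the standard basis of ℤ², is isomorphic to A(D4) × ℤ. -/

import Mathlib

/-- Relations of the Artin group of type `D₄` on generators `a1 = of 0`, `a2 = of 1`,
`a3 = of 2`, `b = of 3`: the `aᵢ` pairwise commute and each `aᵢ` braids with `b`. -/
def AD4rels : Set (FreeGroup (Fin 4)) :=
  {FreeGroup.of 0 * FreeGroup.of 1 * (FreeGroup.of 1 * FreeGroup.of 0)⁻¹,
   FreeGroup.of 0 * FreeGroup.of 2 * (FreeGroup.of 2 * FreeGroup.of 0)⁻¹,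
   FreeGroup.of 1 * FreeGroup.of 2 * (FreeGroup.of 2 * FreeGroup.of 1)⁻¹,
   FreeGroup.of 0 * FreeGroup.of 3 * FreeGroup.of 0 *
      (FreeGroup.of 3 * FreeGroup.of 0 * FreeGroup.of 3)⁻¹,
   FreeGroup.of 1 * FreeGroup.of 3 * FreeGroup.of 1 *
      (FreeGroup.of 3 * FreeGroup.of 1 * FreeGroup.of 3)⁻¹,
   FreeGroup.of 2 * FreeGroup.of 3 * FreeGroup.of 2 *
      (FreeGroup.of 3 * FreeGroup.of 2 * FreeGroup.of 3)⁻¹}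

/-- The Artin group of type `D₄`, as a presented group. -/
abbrev AD4 : Type := PresentedGroup AD4rels

/-- The standard basis of the free abelian group `ℤ²` (written multiplicatively). -/
def u (i : Fin 2) : Multiplicative (Fin 2 → ℤ) := Multiplicative.ofAdd (Pi.single i 1)

/-- The fundamental element `Δ = (a1 a2 a3 b)^3` of `A(D₄)`. -/
def Δ : AD4 :=
  (PresentedGroup.of 0 * PresentedGroup.of 1 * PresentedGroup.of 2 * PresentedGroup.of 3) ^ 3

/-- The normal closure of the single element `(Δ⁻¹, u₁ u₂)` in `A(D₄) × ℤ²`. -/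
def N : Subgroup (AD4 × Multiplicative (Fin 2 → ℤ)) :=
  Subgroup.normalClosure {(Δ⁻¹, u 0 * u 1)}

instance : N.Normal := Subgroup.normalClosure_normal

/-- The fundamental relation of the braid group `A₃`. -/
theorem a3_rel {G : Type*} [Group G] {p q b : G} (hpq : p * q = q * p)
    (hp : p * b * p = b * p * b) (hq : q * b * q = b * q * b) :
    b * (p * q) * b * (p * q) = (p * q) * b * (p * q) * b := by
  calc b * (p * q) * b * (p * q) = b * p * (q * b * (p * q)) := by group
    _ = b * p * (q * b * q) * p := by rw [hpq]; group
    _ = (b * p * b) * q * b * p := by rw [hq]; group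
    _ = p * b * (p * q) * b * p := by rw [← hp]; group
    _ = p * b * q * (p * b * p) := by rw [hpq]; group
    _ = p * (b * q * b) * p * b := by rw [hp]; group
    _ = p * q * b * (q * p) * b := by rw [← hq]; group
    _ = (p * q) * b * (p * q) * b := by rw [← hpq]

/-- `(r p q b)^3` commutes with `r`. -/
theorem d4_comm {G : Type*} [Group G] {r p q b : G} (hrp : r * p = p * r)
    (hrq : r * q = q * r) (hpq : p * q = q * p) (hr : r * b * r = b * r * b)
    (hp : p * b * p = b * p * b) (hq : q * b * q = b * q * b) :
    (r * p * q * b) ^ 3 * r = r * (r * p * q * b) ^ 3 := by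
  have h3 := a3_rel hpq hp hq
  have hs : r * (p * q) = (p * q) * r := by rw [← mul_assoc, hrp, mul_assoc, hrq, mul_assoc]
  rw [show r * p * q * b = r * (p * q) * b by group]
  generalize p * q = s at h3 hs
  have e : b * r = r⁻¹ * b * r * b := by
    rw [mul_assoc, mul_assoc, ← mul_assoc b r b, ← hr]; group
  calc (r * s * b) ^ 3 * r = (r * s) * b * (r * s) * b * (r * s) * (b * r) := by
        simp only [pow_succ, pow_zero, one_mul, mul_assoc]
    _ = (r * s) * b * (r * s) * b * ((r * s) * r⁻¹) * b * r * b := by rw [e]; group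
    _ = (r * s) * b * r * (s * b * s * b) * r * b := by
        rw [show r * s * r⁻¹ = s by rw [hs]; group]; group
    _ = (r * s) * (b * r * b) * s * b * (s * r) * b := by rw [← h3]; group
    _ = (r * s) * (r * b * r) * s * b * (r * s) * b := by rw [hr, hs]
    _ = r * (s * r) * b * (r * s) * b * (r * s) * b := by group
    _ = r * (r * s * b) ^ 3 := by
        rw [← hs]; simp only [pow_succ, pow_zero, one_mul, mul_assoc]

theorem rel_eq {x y : FreeGroup (Fin 4)} (h : x * y⁻¹ ∈ AD4rels) :
    PresentedGroup.mk AD4rels x = PresentedGroup.mk AD4rels y := by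
  have := PresentedGroup.one_of_mem h
  rwa [map_mul, map_inv, mul_inv_eq_one] at this

theorem Δ_comm (g : AD4) : Commute Δ g := by
  obtain ⟨a, ha⟩ : ∃ a : AD4, a = PresentedGroup.of 0 := ⟨_, rfl⟩
  obtain ⟨c, hc⟩ : ∃ a : AD4, a = PresentedGroup.of 1 := ⟨_, rfl⟩
  obtain ⟨d, hd⟩ : ∃ a : AD4, a = PresentedGroup.of 2 := ⟨_, rfl⟩
  obtain ⟨b, hb⟩ : ∃ a : AD4, a = PresentedGroup.of 3 := ⟨_, rfl⟩
  have hac : a * c = c * a := by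
    subst ha hc; exact rel_eq (by simp [AD4rels])
  have had : a * d = d * a := by
    subst ha hd; exact rel_eq (by simp [AD4rels])
  have hcd : c * d = d * c := by
    subst hc hd; exact rel_eq (by simp [AD4rels])
  have hab : a * b * a = b * a * b := by
    subst ha hb; exact rel_eq (by simp [AD4rels])
  have hcb : c * b * c = b * c * b := by
    subst hc hb; exact rel_eq (by simp [AD4rels])
  have hdb : d * b * d = b * d * b := by
    subst hd hb; exact rel_eq (by simp [AD4rels])
  have hΔ : Δ = (a * c * d * b) ^ 3 := by subst ha hc hd hb; rfl
  have h0 : Commute Δ a := by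
    rw [hΔ]; exact d4_comm hac had hcd hab hcb hdb
  have h1 : Commute Δ c := by
    rw [hΔ, hac]; exact d4_comm hac.symm hcd had hcb hab hdb
  have h2 : Commute Δ d := by
    rw [hΔ, show a * c * d = d * a * c by rw [mul_assoc, hcd, ← mul_assoc, had]]
    exact d4_comm had.symm hcd.symm hac hdb hab hcb
  have h3 : Commute Δ b := by
    have hx : Commute Δ (a * c * d * b) := by
      rw [hΔ]; exact (Commute.refl _).pow_left 3
    have hP : Commute Δ (a * c * d) := (h0.mul_right h1).mul_right h2
    have := hP.inv_right.mul_right hx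
    rwa [inv_mul_cancel_left] at this
  have hg : g ∈ Subgroup.closure (Set.range (PresentedGroup.of (rels := AD4rels))) := by
    rw [PresentedGroup.closure_range_of]; trivial
  induction hg using Subgroup.closure_induction with
  | mem x hx =>
    obtain ⟨i, rfl⟩ := hx
    fin_cases i
    · exact ha ▸ h0
    · exact hc ▸ h1
    · exact hd ▸ h2
    · exact hb ▸ h3
  | one => exact Commute.one_right _
  | mul x y _ _ hx hy => exact hx.mul_right hy
  | inv x _ hx => exact hx.inv_right

/-- The map `(g, v) ↦ (g Δ^{v₀}, v₁ - v₀)`. -/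
def phi : AD4 × Multiplicative (Fin 2 → ℤ) →* AD4 × Multiplicative ℤ where
  toFun x := (x.1 * Δ ^ (x.2.toAdd 0), Multiplicative.ofAdd (x.2.toAdd 1 - x.2.toAdd 0))
  map_one' := by simp
  map_mul' x y := by
    refine Prod.ext ?_ ?_
    · have := ((Δ_comm y.1).zpow_left (x.2.toAdd 0)).eq
      simp only [Prod.fst_mul, Prod.snd_mul, toAdd_mul, Pi.add_apply, zpow_add]
      rw [mul_assoc, mul_assoc, ← mul_assoc y.1, ← this, mul_assoc]
    · simp only [Prod.snd_mul, toAdd_mul, Pi.add_apply, ← ofAdd_add]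
      congr 1; ring

theorem phi_surj : Function.Surjective phi := by
  rintro ⟨g, n⟩
  refine ⟨(g, Multiplicative.ofAdd ![0, n.toAdd]), ?_⟩
  simp [phi]

theorem phi_ker : N = phi.ker := by
  apply le_antisymm
  · apply Subgroup.normalClosure_le_normal
    rintro _ rfl
    simp [MonoidHom.mem_ker, phi, u]
  · rintro ⟨g, v⟩ h
    rw [MonoidHom.mem_ker] at h
    have h1 : g * Δ ^ (v.toAdd 0) = 1 := congrArg Prod.fst h
    have h2 : v.toAdd 1 - v.toAdd 0 = 0 := congrArg (fun x => x.2.toAdd) h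
    have hz : (g, v) = ((Δ⁻¹, u 0 * u 1) : AD4 × Multiplicative (Fin 2 → ℤ)) ^ (v.toAdd 0) := by
      refine Prod.ext ?_ ?_
      · simp only [Prod.pow_fst, inv_zpow]
        exact eq_inv_of_mul_eq_one_left h1
      · apply Multiplicative.toAdd.injective
        funext i
        fin_cases i
        · simp [u]
        · simp [u]; omega
    rw [hz]
    exact N.zpow_mem (Subgroup.subset_normalClosure rfl) _

/-- Corollary 9: `(A(D₄) × ℤ²)` modulo the relation `u₁ u₂ = (a1 a2 a3 b)^3` is isomorphic
to `A(D₄) × ℤ` (the algebraic content of `PMod(1,2,1) ≅ A(D₄) × ℤ`). -/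
theorem stmt_13 :
    Nonempty ((AD4 × Multiplicative (Fin 2 → ℤ)) ⧸ N ≃* AD4 × Multiplicative ℤ) := by
  exact ⟨(QuotientGroup.quotientMulEquivOfEq phi_ker).trans
    (QuotientGroup.quotientKerEquivOfSurjective phi phi_surj)⟩
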